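/- arXiv:0810.3864 — 2 statements merged into one kernel-verified Lean document; each statement's English description precedes it below -/
import Mathlib

section
/- Let K be an algebraically closed field of characteristic zero, let G be an n×n matrix over K with exactly m distinct eigenvalues λ_1, …, λ_m, and let P_spec(X) = ∏_{i=1}^{m} (X − λ_i) be its spectral polynomial. Then for every λ ∈ K, det M_{m,1}(λI − G) = det M_m(G) · P_spec(λ); equivalently, P_spec(λ) = det M_{m,1}(λI − G) / det M_m(G). -/
open Polynomial Matrix

namespace Matrix

section AlgClosed

variable {K ι : Type*} [Field K] [IsAlgClosed K] [Fintype ι] [DecidableEq ι]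

theorem det_aeval_eq_prod_roots_charpoly (G : Matrix ι ι K) (p : K[X]) :
    (aeval G p).det = (G.charpoly.roots.map fun r => p.eval r).prod := by
  have hcard : G.charpoly.roots.card = Fintype.card ι := by
    rw [← (IsAlgClosed.splits G.charpoly).natDegree_eq_card_roots, charpoly_natDegree_eq_dim]
  have hlin (a : K) : (aeval G (X - C a)).det =
      (G.charpoly.roots.map fun r => (X - C a).eval r).prod := by
    have h := (IsAlgClosed.splits G.charpoly).eval_eq_prod_roots_of_monic G.charpoly_monic a
    rw [eval_charpoly] at h
    have hneg : aeval G (X - C a) = -(scalar ι a - G) := by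
      simp [algebraMap_eq_diagonal, Pi.algebraMap_def]
    have hroots : (G.charpoly.roots.map fun r => (X - C a).eval r) =
        (G.charpoly.roots.map fun r => a - r).map Neg.neg := by
      simp [Multiset.map_map]
    rw [hneg, det_neg, h, hroots, Multiset.prod_map_neg, Multiset.card_map, hcard]
  rw [(IsAlgClosed.splits p).eq_prod_roots]
  induction p.roots using Multiset.induction_on with
  | empty => simp [algebraMap_eq_diagonal, Pi.algebraMap_def, hcard]
  | cons a s ih =>
    rw [Multiset.map_cons, Multiset.prod_cons, mul_left_comm, map_mul, det_mul, ih, hlin]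
    simp only [eval_mul, Multiset.prod_map_mul]

theorem charpoly_aeval_eq_prod (G : Matrix ι ι K) (p : K[X]) :
    (aeval G p).charpoly = (G.charpoly.roots.map fun r => X - C (p.eval r)).prod := by
  refine Polynomial.funext fun x => ?_
  have h := det_aeval_eq_prod_roots_charpoly G (C x - p)
  have hsub : aeval G (C x - p) = scalar ι x - aeval G p := by
    simp [algebraMap_eq_diagonal, Pi.algebraMap_def]
  rw [eval_charpoly, ← hsub, h, eval_multiset_prod, Multiset.map_map]
  simp

theorem trace_aeval_eq_sum_roots_charpoly (G : Matrix ι ι K) (p : K[X]) :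
    (aeval G p).trace = (G.charpoly.roots.map fun r => p.eval r).sum := by
  have hroots : (aeval G p).charpoly.roots = G.charpoly.roots.map fun r => p.eval r := by
    rw [charpoly_aeval_eq_prod]
    simpa [Multiset.map_map] using
      roots_multiset_prod_X_sub_C (G.charpoly.roots.map fun r => p.eval r)
  rw [trace_eq_sum_roots_charpoly, hroots]

end AlgClosed

section Hankel

variable {R : Type*} [CommRing R] {m : ℕ}

theorem det_hankel_sum_mul_pow (c v : Fin m → R) :
    (of fun i j : Fin m => ∑ k, c k * v k ^ (i.1 + j.1)).det =
      (∏ k, c k) * (vandermonde v).det ^ 2 := by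
  have h : (of fun i j : Fin m => ∑ k, c k * v k ^ (i.1 + j.1)) =
      (vandermonde v)ᵀ * diagonal c * vandermonde v := by
    ext i j
    rw [of_apply, mul_apply]
    simp only [mul_diagonal, transpose_apply, vandermonde_apply, pow_add]
    exact Finset.sum_congr rfl fun k _ => by ring
  rw [h, det_mul, det_mul, det_transpose, det_diagonal]
  ring

theorem det_vandermonde_const_sub_sq (v : Fin m → R) (a : R) :
    (vandermonde fun i => a - v i).det ^ 2 = (vandermonde v).det ^ 2 := by
  simp only [det_vandermonde, ← Finset.prod_pow]
  exact Finset.prod_congr rfl fun i _ => Finset.prod_congr rfl fun j _ => by ring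

end Hankel

end Matrix

/-- Over an algebraically closed field of characteristic zero, let `G`
have exactly `m` distinct eigenvalues (the distinct roots of its characteristic
polynomial) and let `P_spec(X) = ∏ (X - λᵢ)` be its spectral polynomial.  Then for every
`λ ∈ K`, `det M_{m,1}(λI - G) = det M_m(G) · P_spec(λ)`.  Here the `(i,j)` entry of
`M_{t,l}(A)` (`0`-based) is `tr A^{i+j+l}` and `M_t := M_{t,0}`. -/
theorem det_M_shift_eq_det_M_mul_spec {K : Type*} [Field K] [IsAlgClosed K]
    [CharZero K] [DecidableEq K] {n m : ℕ} (G : Matrix (Fin n) (Fin n) K)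
    (hm : G.charpoly.roots.toFinset.card = m) (lam : K) :
    (Matrix.of fun i j : Fin m =>
        ((lam • (1 : Matrix (Fin n) (Fin n) K) - G) ^ (i.1 + j.1 + 1)).trace).det =
      (Matrix.of fun i j : Fin m => (G ^ (i.1 + j.1)).trace).det *
        ∏ μ ∈ G.charpoly.roots.toFinset, (lam - μ) := by
  obtain ⟨e⟩ : Nonempty (Fin m ≃ G.charpoly.roots.toFinset) :=
    ⟨(Finset.equivFinOfCardEq hm).symm⟩
  let v : Fin m → K := fun k => e k
  let c : Fin m → K := fun k => (G.charpoly.roots.count (v k) : K)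
  have htrace (p : K[X]) : (aeval G p).trace = ∑ k, c k * p.eval (v k) := by
    rw [trace_aeval_eq_sum_roots_charpoly, Finset.sum_multiset_map_count,
      ← Finset.sum_coe_sort, ← e.sum_comp]
    simp [c, v, nsmul_eq_mul]
  have hG (k : ℕ) : (G ^ k).trace = ∑ i, c i * v i ^ k := by
    simpa using htrace (X ^ k)
  have hshift (k : ℕ) : ((lam • (1 : Matrix (Fin n) (Fin n) K) - G) ^ (k + 1)).trace =
      ∑ i, c i * (lam - v i) * (lam - v i) ^ k := by
    simp only [mul_assoc, ← pow_succ']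
    have h := htrace ((C lam - X) ^ (k + 1))
    simpa only [map_pow, map_sub, aeval_C, aeval_X, Algebra.algebraMap_eq_smul_one, eval_pow,
      eval_sub, eval_C, eval_X] using h
  have hspec : ∏ μ ∈ G.charpoly.roots.toFinset, (lam - μ) = ∏ k, (lam - v k) := by
    rw [← Finset.prod_coe_sort, ← e.prod_comp]
  simp only [hG, hshift]
  rw [det_hankel_sum_mul_pow, det_hankel_sum_mul_pow, det_vandermonde_const_sub_sq, hspec,
    Finset.prod_mul_distrib]
  ring
end

section
/- Let K be an algebraically closed field and let G be an n×n matrix over K whose characteristic polynomial is (X − λ)^p (X − μ)^q with λ ≠ μ in K and p, q ≥ 1 (so G has exactly the two eigenvalues λ and μ with multiplicities p and q). Then for every integer l ≥ 0, det M_{1,l}(G) = p·λ^l + q·μ^l, det M_{2,l}(G) = p·q·(λμ)^l·(λ − μ)², and det M_{t,l}(G) = 0 for every t ≥ 3. -/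
open Polynomial Matrix

/-- If the characteristic polynomial of `A` divides a power of `f`, then `f(A)` is nilpotent, so
it and all its products with powers of `A` have trace zero. -/
theorem Matrix.trace_pow_mul_aeval_eq_zero {K m : Type*} [Field K] [Fintype m] [DecidableEq m]
    (A : Matrix m m K) {f : K[X]} {N : ℕ} (hf : A.charpoly ∣ f ^ N) (k : ℕ) :
    (A ^ k * aeval A f).trace = 0 := by
  have hnil : IsNilpotent (aeval A f) := by
    obtain ⟨g, hg⟩ := hf
    exact ⟨N, by rw [← map_pow, hg, map_mul, aeval_self_charpoly, zero_mul]⟩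
  have hcomm : Commute (A ^ k) (aeval A f) := by
    simpa using Commute.map (Commute.all (X ^ k : K[X]) f) (aeval A)
  exact (Matrix.isNilpotent_trace_of_isNilpotent (hcomm.isNilpotent_mul_left hnil)).eq_zero

theorem Matrix.trace_pow_of_charpoly_eq {K : Type*} [Field K] {n p q : ℕ}
    (G : Matrix (Fin n) (Fin n) K) (lam mu : K)
    (hchar : G.charpoly = (X - C lam) ^ p * (X - C mu) ^ q) (k : ℕ) :
    (G ^ k).trace = p * lam ^ k + q * mu ^ k := by
  have hne : (X - C lam) ^ p * (X - C mu) ^ q ≠ 0 :=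
    mul_ne_zero (pow_ne_zero _ (X_sub_C_ne_zero _)) (pow_ne_zero _ (X_sub_C_ne_zero _))
  have hdvd : G.charpoly ∣ ((X - C lam) * (X - C mu)) ^ (p + q) := by
    rw [hchar, mul_pow]
    exact mul_dvd_mul (pow_dvd_pow _ (by omega)) (pow_dvd_pow _ (by omega))
  have hrec (k : ℕ) : (G ^ (k + 2)).trace
      = (lam + mu) * (G ^ (k + 1)).trace - lam * mu * (G ^ k).trace := by
    have h := G.trace_pow_mul_aeval_eq_zero hdvd k
    have hexp : G ^ k * aeval G ((X - C lam) * (X - C mu))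
        = G ^ (k + 2) - (lam + mu) • G ^ (k + 1) + (lam * mu) • G ^ k := by
      simp only [map_mul, map_sub, aeval_X, aeval_C, Algebra.algebraMap_eq_smul_one, pow_succ,
        mul_sub, sub_mul, mul_smul_comm, smul_mul_assoc, mul_one, one_mul, mul_assoc]
      module
    rw [hexp, trace_add, trace_sub, trace_smul, trace_smul, smul_eq_mul, smul_eq_mul] at h
    linear_combination h
  induction k using Nat.twoStepInduction with
  | zero =>
    have hdeg := congrArg natDegree hchar
    rw [charpoly_natDegree_eq_dim, natDegree_mul (left_ne_zero_of_mul hne)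
      (right_ne_zero_of_mul hne), natDegree_pow, natDegree_pow] at hdeg
    simp only [Fintype.card_fin, natDegree_X_sub_C, mul_one] at hdeg
    simp [hdeg]
  | one =>
    have hsplits : G.charpoly.Splits := by
      rw [hchar]
      exact ((Splits.X_sub_C lam).pow p).mul ((Splits.X_sub_C mu).pow q)
    rw [pow_one, trace_eq_sum_roots_charpoly_of_splits hsplits, hchar, roots_mul hne]
    simp [Multiset.sum_nsmul]
  | more k ih₀ ih₁ =>
    rw [hrec, ih₀, ih₁]
    ring

/-- A Hankel matrix of size at least `3` built from a sequence satisfying a linear recurrence of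
order `2` is singular. -/
theorem Matrix.det_hankel_eq_zero_of_recurrence {K : Type*} [Field K] (u : ℕ → K) (a b : K)
    (hu : ∀ k, u (k + 2) = a * u (k + 1) + b * u k) {t : ℕ} (ht : 3 ≤ t) (l : ℕ) :
    (Matrix.of fun i j : Fin t => u (i.1 + j.1 + l)).det = 0 := by
  obtain ⟨s, rfl⟩ := Nat.exists_eq_add_of_le' ht
  refine exists_vecMul_eq_zero_iff.mp
    ⟨Fin.cons (-b) (Fin.cons (-a) (Fin.cons 1 0)), fun h => ?_, ?_⟩
  · exact one_ne_zero (congrFun h (Fin.succ (Fin.succ 0)))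
  · ext j
    have h := hu (j.1 + l)
    simp only [vecMul, dotProduct, Fin.sum_univ_succ, Fin.cons_zero, Fin.cons_succ, of_apply,
      Fin.val_zero, Fin.val_succ, Pi.zero_apply, zero_mul, Finset.sum_const_zero]
    rw [show 0 + j.1 + l = j.1 + l by ring, show 0 + 1 + j.1 + l = j.1 + l + 1 by ring,
      show 0 + 1 + 1 + j.1 + l = j.1 + l + 2 by ring]
    linear_combination h

/-- Let `G` be an `n × n` matrix over an algebraically closed field
whose characteristic polynomial is `(X - λ)^p (X - μ)^q` with `λ ≠ μ` and `p, q ≥ 1`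
(so `G` has exactly the two eigenvalues `λ, μ` with multiplicities `p, q`).  Then for
every `l ≥ 0`: `det M_{1,l}(G) = p·λ^l + q·μ^l`,
`det M_{2,l}(G) = p·q·(λμ)^l·(λ - μ)²`, and `det M_{t,l}(G) = 0` for every `t ≥ 3`.
Here the `(i,j)` entry of `M_{t,l}(G)` (`0`-based) is `tr G^{i+j+l}`. -/
theorem det_M_two_eigenvalues {K : Type*} [Field K] [IsAlgClosed K] {n p q : ℕ}
    (G : Matrix (Fin n) (Fin n) K) (lam mu : K) (hne : lam ≠ mu)
    (hp : 1 ≤ p) (hq : 1 ≤ q)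
    (hchar : G.charpoly = (X - C lam) ^ p * (X - C mu) ^ q) :
    (∀ l : ℕ,
      (Matrix.of fun i j : Fin 1 => (G ^ (i.1 + j.1 + l)).trace).det
        = p * lam ^ l + q * mu ^ l) ∧
    (∀ l : ℕ,
      (Matrix.of fun i j : Fin 2 => (G ^ (i.1 + j.1 + l)).trace).det
        = p * q * (lam * mu) ^ l * (lam - mu) ^ 2) ∧
    (∀ t l : ℕ, 3 ≤ t →
      (Matrix.of fun i j : Fin t => (G ^ (i.1 + j.1 + l)).trace).det = 0) := by
  simp_rw [G.trace_pow_of_charpoly_eq lam mu hchar]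
  refine ⟨fun l => ?_, fun l => ?_, fun t l ht => ?_⟩
  · simp
  · simp only [det_fin_two, of_apply, Fin.val_zero, Fin.val_one]
    ring
  · exact det_hankel_eq_zero_of_recurrence (fun k => p * lam ^ k + q * mu ^ k) (lam + mu)
      (-(lam * mu)) (fun k => by ring) ht l
end
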